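/- arXiv:2205.09160 — 5 statements merged into one kernel-verified Lean document; each statement's English description precedes it below -/
import Mathlib

section
/- Let f : ℝⁿ → ℝ be a twice continuously differentiable function whose gradient ∇f is L-Lipschitz, and fix a step size γ ∈ (0, 1/L). Define the gradient-descent map g(x) = x − γ∇f(x). Then the set of initial conditions x ∈ ℝⁿ for which the iterate sequence (gᵏ(x))_{k∈ℕ} converges to some strict saddle point of f has Lebesgue measure zero. -/
/-!
Gradient descent is the iteration of `g x = x - γ ∇f x`. At a strict saddle `p` the derivative
`A = 1 - γ ∇²f p` is symmetric, positive (as `γ L < 1`) and satisfies `⟪u, A u⟫ > ‖u‖²` for some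
`u`. The existence of a center-stable manifold is not needed: it suffices that the set `S` of points
whose orbit stays forever near `p` meets every line of direction `u` at most once.

Choose `c > 1` below the Rayleigh quotient of `A` at `u` and outside the (finite) spectrum of `A`,
and put `M = A - c`, `Q w = ⟪w, M w⟫`. Then `Q u > 0`, and from
`A M A = c² M + c M² + M A M` one gets `Q (A w) ≥ c² Q w + c ‖M w‖²`. As `M` is bounded below, the
second term absorbs small perturbations (`exists_expanding_form`), so `Q (g x - g y) ≥ c² Q (x - y)`
for `x`, `y` near `p`. If two points of `S` differed by a nonzero multiple of `u`, then `Q` of the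
difference of their iterates would grow geometrically, although these iterates stay in a bounded
set. Hence the translates of the closed set `S` by distinct multiples of `u` are disjoint and `S` is
null (`exists_nhds_null`).

Globally, `‖g x - g y‖ ≥ (1 - γ L) ‖x - y‖`, so preimages of null sets under iterates of `g` are
null. An orbit converging to `p` eventually stays near `p`, and countably many of the neighbourhoods
above cover the set of strict saddles, so the exceptional set is a countable union of null sets.
-/

open MeasureTheory Filter Topology
open scoped RealInnerProductSpace

section Local

variable {E : Type*} [NormedAddCommGroup E] [InnerProductSpace ℝ E] [FiniteDimensional ℝ E]

/-- A constant `c > 1` that lies below the Rayleigh quotient of `A` at `u` and is not an eigenvalue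
of `A`; the second fact is given in the quantitative form that `A - c` is bounded below. -/
lemma exists_shift (A : E →L[ℝ] E) (u : E) (hu : ⟪u, u⟫ < ⟪u, A u⟫) :
    ∃ c δ : ℝ, 1 < c ∧ 0 < δ ∧ 0 < ⟪u, A u - c • u⟫ ∧ ∀ w, δ * ‖w‖ ^ 2 ≤ ‖A w - c • w‖ ^ 2 := by
  have hu0 : u ≠ 0 := by
    rintro rfl
    simp at hu
  have hpos : 0 < ⟪u, u⟫ := real_inner_self_pos.2 hu0
  have h1 : 1 < ⟪u, A u⟫ / ⟪u, u⟫ := by rwa [one_lt_div hpos]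
  obtain ⟨c, ⟨hc1, hc2⟩, hc⟩ := ((Set.Ioo_infinite h1).sdiff
    (Module.End.finite_hasEigenvalue (A : E →ₗ[ℝ] E))).nonempty
  have hker : LinearMap.ker ((A : E →ₗ[ℝ] E) - c • LinearMap.id) = ⊥ := by
    rw [LinearMap.ker_eq_bot']
    intro m hm
    by_contra hm0
    refine hc (Module.End.hasEigenvalue_of_hasEigenvector (x := m) ⟨?_, hm0⟩)
    rw [Module.End.mem_eigenspace_iff]
    simpa [sub_eq_zero] using hm
  obtain ⟨K, hK, hanti⟩ := LinearMap.exists_antilipschitzWith _ hker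
  have hK' : (0 : ℝ) < K := hK
  refine ⟨c, ((K : ℝ) ^ 2)⁻¹, hc1, by positivity, ?_, fun w => ?_⟩
  · rw [inner_sub_right, real_inner_smul_right]
    rw [lt_div_iff₀ hpos] at hc2
    linarith
  · have h := hanti.le_mul_norm (map_zero _) w
    simp only [LinearMap.sub_apply, LinearMap.smul_apply, LinearMap.id_apply,
      ContinuousLinearMap.coe_coe] at h
    rw [inv_mul_le_iff₀ (by positivity), ← mul_pow]
    exact pow_le_pow_left₀ (norm_nonneg _) h 2

/-- The form `Q w = ⟪w, A w - c w⟫` grows at least by the factor `c ^ 2 > 1` under `A`, even after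
adding a small error to `A w`. -/
lemma exists_expanding_form (A : E →L[ℝ] E) (hsymm : ∀ v w, ⟪A v, w⟫ = ⟪v, A w⟫)
    (hA : ∀ w, 0 ≤ ⟪w, A w⟫) (u : E) (hu : ⟪u, u⟫ < ⟪u, A u⟫) :
    ∃ c ε : ℝ, 1 < c ∧ 0 < ε ∧ 0 < ⟪u, A u - c • u⟫ ∧ ∀ w e : E, ‖e‖ ≤ ε * ‖w‖ →
      c ^ 2 * ⟪w, A w - c • w⟫ ≤ ⟪A w + e, A (A w + e) - c • (A w + e)⟫ := by
  obtain ⟨c, δ, hc, hδ, hcu, hlow⟩ := exists_shift A u hu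
  have hc0 : 0 < c := by linarith
  set M : E →L[ℝ] E := A - c • ContinuousLinearMap.id ℝ E with hM
  have hMw : ∀ w, A w - c • w = M w := fun w => by simp [hM]
  have hMs : ∀ v w, ⟪M v, w⟫ = ⟪v, M w⟫ := fun v w => by
    simp only [← hMw, inner_sub_left, inner_sub_right, hsymm, real_inner_smul_left,
      real_inner_smul_right]
  simp only [hMw] at hcu hlow
  set B : ℝ := 2 * (‖M‖ * ‖A‖) + ‖M‖ + 1 with hB
  have hB0 : 0 < B := by positivity
  refine ⟨c, min 1 (c * δ / B), hc, by positivity, hcu, fun w e he => ?_⟩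
  set ε := min 1 (c * δ / B) with hε
  have hε0 : 0 < ε := by positivity
  have hε1 : ε ≤ 1 := min_le_left _ _
  have hεB : ε * B ≤ c * δ := (le_div_iff₀ hB0).1 (min_le_right _ _)
  have hAM : ∀ w, A w = M w + c • w := fun w => by simp [← hMw]
  -- the identity `A M A = c² M + c M² + M A M`
  have hlin : ⟪A w, M (A w)⟫ = c ^ 2 * ⟪w, M w⟫ + c * ‖M w‖ ^ 2 + ⟪M w, A (M w)⟫ := by
    have e1 : ⟪w, M (M w)⟫ = ⟪M w, M w⟫ := (hMs _ _).symm
    rw [hAM (M w), hAM w, ← real_inner_self_eq_norm_sq]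
    simp only [map_add, map_smul, inner_add_left, inner_add_right, real_inner_smul_left,
      real_inner_smul_right, e1]
    ring
  have hexp : ⟪A w + e, M (A w + e)⟫ = ⟪A w, M (A w)⟫ + 2 * ⟪e, M (A w)⟫ + ⟪e, M e⟫ := by
    have e1 : ⟪A w, M e⟫ = ⟪e, M (A w)⟫ := by rw [← hMs, real_inner_comm]
    simp only [map_add, inner_add_left, inner_add_right, e1]
    ring
  have b1 : |⟪e, M (A w)⟫| ≤ (ε * ‖w‖) * (‖M‖ * (‖A‖ * ‖w‖)) :=
    (abs_real_inner_le_norm _ _).trans (mul_le_mul he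
      ((M.le_opNorm _).trans (by gcongr; exact A.le_opNorm _)) (norm_nonneg _) (by positivity))
  have b2 : |⟪e, M e⟫| ≤ (ε * ‖w‖) * (‖M‖ * (1 * ‖w‖)) :=
    (abs_real_inner_le_norm _ _).trans (mul_le_mul he
      ((M.le_opNorm _).trans (by gcongr; exact he.trans (by gcongr))) (norm_nonneg _)
      (by positivity))
  have b3 : (ε * B) * ‖w‖ ^ 2 ≤ c * ‖M w‖ ^ 2 := by
    calc (ε * B) * ‖w‖ ^ 2 ≤ (c * δ) * ‖w‖ ^ 2 := by gcongr
      _ = c * (δ * ‖w‖ ^ 2) := by ring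
      _ ≤ _ := by gcongr; exact hlow w
  have b4 : 0 ≤ ε * ‖w‖ ^ 2 := by positivity
  have b5 := hA (M w)
  rw [hMw, hMw, hexp, hlin]
  have := neg_abs_le ⟪e, M (A w)⟫
  have := neg_abs_le ⟪e, M e⟫
  rw [hB] at b3
  linarith

/-- Only a null set of points has its whole orbit close to a point at which the derivative of `g` is
symmetric, positive and expands some direction. -/
lemma exists_nhds_null [MeasurableSpace E] [BorelSpace E] (μ : Measure E) [μ.IsAddHaarMeasure]
    {g : E → E} (hg : Continuous g) {p : E} {A : E →L[ℝ] E} (hd : HasStrictFDerivAt g A p)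
    (hsymm : ∀ v w, ⟪A v, w⟫ = ⟪v, A w⟫) (hA : ∀ w, 0 ≤ ⟪w, A w⟫)
    (u : E) (hu : ⟪u, u⟫ < ⟪u, A u⟫) :
    ∃ U ∈ 𝓝 p, μ {x | ∀ k, g^[k] x ∈ U} = 0 := by
  obtain ⟨c, ε, hc, hε, hcu, hgrow⟩ := exists_expanding_form A hsymm hA u hu
  obtain ⟨s, hs, happ⟩ := hd.approximates_deriv_on_nhds (c := ⟨ε, hε.le⟩) (Or.inr hε)
  obtain ⟨r, hr, hrs⟩ := Metric.nhds_basis_closedBall.mem_iff.1 hs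
  refine ⟨Metric.closedBall p r, Metric.closedBall_mem_nhds p hr, ?_⟩
  set S := {x | ∀ k, g^[k] x ∈ Metric.closedBall p r} with hS
  have hSclosed : IsClosed S := by
    rw [hS, Set.ofPred_forall]
    exact isClosed_iInter fun k => Metric.isClosed_closedBall.preimage (hg.iterate k)
  have key : ∀ x ∈ S, ∀ y ∈ S, ⟪x - y, A (x - y) - c • (x - y)⟫ ≤ 0 := by
    intro x hx y hy
    by_contra! hQ
    have hiter : ∀ k : ℕ, (c ^ 2) ^ k * ⟪x - y, A (x - y) - c • (x - y)⟫ ≤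
        ⟪g^[k] x - g^[k] y, A (g^[k] x - g^[k] y) - c • (g^[k] x - g^[k] y)⟫ := by
      intro k
      induction k with
      | zero => simp
      | succ k ih =>
        have h := hgrow (g^[k] x - g^[k] y)
          (g (g^[k] x) - g (g^[k] y) - A (g^[k] x - g^[k] y))
          (happ _ (hrs (hx k)) _ (hrs (hy k)))
        rw [add_sub_cancel] at h
        simp only [Function.iterate_succ_apply']
        refine le_trans ?_ h
        rw [pow_succ', mul_assoc]
        gcongr
    have hbound : ∀ k : ℕ,
        ⟪g^[k] x - g^[k] y, A (g^[k] x - g^[k] y) - c • (g^[k] x - g^[k] y)⟫ ≤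
          (2 * r) * (‖A - c • ContinuousLinearMap.id ℝ E‖ * (2 * r)) := by
      intro k
      have hw : ‖g^[k] x - g^[k] y‖ ≤ 2 * r := by
        rw [← dist_eq_norm]
        have h1 := Metric.mem_closedBall.1 (hx k)
        have h2 := Metric.mem_closedBall.1 (hy k)
        linarith [dist_triangle_right (g^[k] x) (g^[k] y) p]
      refine (real_inner_le_norm _ _).trans (mul_le_mul hw ?_ (norm_nonneg _) (by positivity))
      refine le_trans ?_ (((A - c • ContinuousLinearMap.id ℝ E).le_opNorm
        (g^[k] x - g^[k] y)).trans (by gcongr))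
      simp
    obtain ⟨k, hk⟩ := pow_unbounded_of_one_lt
      ((2 * r) * (‖A - c • ContinuousLinearMap.id ℝ E‖ * (2 * r)) /
        ⟪x - y, A (x - y) - c • (x - y)⟫) (one_lt_pow₀ hc two_ne_zero : 1 < c ^ 2)
    rw [div_lt_iff₀ hQ] at hk
    exact absurd ((hiter k).trans (hbound k)) (not_le.2 hk)
  refine Measure.addHaar_eq_zero_of_disjoint_translates μ
    (fun n : ℕ => (1 / ((n : ℝ) + 1)) • u) ?_ ?_ hSclosed.measurableSet
  · have : Tendsto (fun n : ℕ => (1 / ((n : ℝ) + 1)) • u) atTop (𝓝 ((0 : ℝ) • u)) :=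
      tendsto_one_div_add_atTop_nhds_zero_nat.smul_const u
    exact Metric.isBounded_range_of_tendsto _ this
  · intro m n hmn
    simp only [Function.onFun, Set.disjoint_left, Set.singleton_add, Set.mem_image]
    rintro _ ⟨x, hx, rfl⟩ ⟨y, hy, hxy⟩
    have hne : 1 / ((n : ℝ) + 1) - 1 / ((m : ℝ) + 1) ≠ 0 := by
      intro h
      apply hmn
      rw [sub_eq_zero, one_div, one_div, inv_inj, add_left_inj] at h
      exact_mod_cast h.symm
    have hsub : x - y = (1 / ((n : ℝ) + 1) - 1 / ((m : ℝ) + 1)) • u := by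
      rw [sub_smul, sub_eq_sub_iff_add_eq_add, add_comm x, ← hxy]
    have h := key x hx y hy
    rw [hsub, map_smul, smul_comm c, ← smul_sub, real_inner_smul_left, real_inner_smul_right,
      ← mul_assoc] at h
    have := mul_pos (mul_self_pos.2 hne) hcu
    linarith

lemma null_preimage_of_antilipschitz [MeasurableSpace E] [BorelSpace E] (μ : Measure E)
    [μ.IsAddHaarMeasure] {g : E → E} {K : NNReal} (hg : AntilipschitzWith K g) {s : Set E}
    (hs : μ s = 0) : μ (g ⁻¹' s) = 0 := by
  have h1 : μ ≪ Measure.hausdorffMeasure (Module.finrank ℝ E : ℝ) :=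
    Measure.absolutelyContinuous_isAddHaarMeasure _ _
  have h2 : (Measure.hausdorffMeasure (Module.finrank ℝ E : ℝ) : Measure E) ≪ μ :=
    Measure.absolutelyContinuous_isAddHaarMeasure _ _
  apply h1
  have h := hg.hausdorffMeasure_preimage_le (d := (Module.finrank ℝ E : ℝ)) (by positivity) s
  rw [h2 hs, mul_zero] at h
  exact nonpos_iff_eq_zero.1 h

lemma null_preimage_iterate [MeasurableSpace E] [BorelSpace E] (μ : Measure E)
    [μ.IsAddHaarMeasure] {g : E → E} {K : NNReal} (hg : AntilipschitzWith K g) {s : Set E}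
    (hs : μ s = 0) (n : ℕ) : μ (g^[n] ⁻¹' s) = 0 := by
  induction n with
  | zero => simpa using hs
  | succ n ih =>
    rw [Function.iterate_succ, Set.preimage_comp]
    exact null_preimage_of_antilipschitz μ hg ih

lemma contDiff_gradient {f : E → ℝ} (hf : ContDiff ℝ 2 f) : ContDiff ℝ 1 (gradient f) :=
  ((InnerProductSpace.toDual ℝ E).symm.toContinuousLinearEquiv.contDiff).comp
    (hf.fderiv_right (m := 1) (by norm_num))

lemma inner_fderiv_gradient {f : E → ℝ} (hf : ContDiff ℝ 2 f) (p v w : E) :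
    ⟪fderiv ℝ (gradient f) p v, w⟫ = fderiv ℝ (fderiv ℝ f) p v w := by
  have hd : DifferentiableAt ℝ (fderiv ℝ f) p :=
    (hf.fderiv_right (m := 1) (by norm_num)).differentiable one_ne_zero p
  have h1 := ((contDiff_gradient hf).differentiable one_ne_zero p).hasFDerivAt.inner ℝ
    (hasFDerivAt_const w p)
  have h2 := hd.hasFDerivAt.clm_apply (hasFDerivAt_const w p)
  have heq : (fun x => ⟪gradient f x, w⟫) = fun x => fderiv ℝ f x w :=
    funext fun x => InnerProductSpace.toDual_symm_apply
  rw [heq] at h1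
  simpa using DFunLike.congr_fun (h1.unique h2) v

end Local

/-- For a `C²` function with `L`-Lipschitz gradient and step size
`γ ∈ (0, 1/L)`, the set of initial conditions from which the gradient-descent
iterates converge to a strict saddle point of `f` has Lebesgue measure zero. -/
theorem gd_avoids_strict_saddles {n : ℕ} (f : EuclideanSpace ℝ (Fin n) → ℝ)
    (hf : ContDiff ℝ 2 f) (L : ℝ) (hL : 0 < L)
    (hlip : ∀ x y, ‖gradient f x - gradient f y‖ ≤ L * ‖x - y‖)
    (γ : ℝ) (hγ : γ ∈ Set.Ioo 0 (1 / L)) :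
    volume {x : EuclideanSpace ℝ (Fin n) |
      ∃ p : EuclideanSpace ℝ (Fin n),
        (gradient f p = 0 ∧ ∃ u, u ≠ 0 ∧ ⟪u, fderiv ℝ (gradient f) p u⟫ < 0) ∧
        Tendsto (fun k => (fun y => y - γ • gradient f y)^[k] x) atTop (𝓝 p)} = 0 := by
  obtain ⟨hγ0, hγ1⟩ := hγ
  have hγL : γ * L < 1 := (lt_div_iff₀ hL).1 hγ1
  set g : EuclideanSpace ℝ (Fin n) → EuclideanSpace ℝ (Fin n) :=
    fun y => y - γ • gradient f y with hg
  have hG := contDiff_gradient hf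
  have hgc : Continuous g := continuous_id.sub (hG.continuous.const_smul γ)
  have hanti : AntilipschitzWith (1 - γ * L)⁻¹.toNNReal g := by
    refine AntilipschitzWith.of_le_mul_dist fun x y => ?_
    rw [dist_eq_norm, dist_eq_norm, Real.coe_toNNReal _ (inv_nonneg.2 (by linarith)),
      le_inv_mul_iff₀ (by linarith)]
    have h1 : x - y = (g x - g y) + γ • (gradient f x - gradient f y) := by
      simp only [hg, smul_sub]
      abel
    have h2 : ‖x - y‖ ≤ ‖g x - g y‖ + γ * (L * ‖x - y‖) := by
      calc ‖x - y‖ ≤ ‖g x - g y‖ + ‖γ • (gradient f x - gradient f y)‖ :=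
            (congrArg norm h1).trans_le (norm_add_le _ _)
        _ ≤ _ := by
            rw [norm_smul, Real.norm_of_nonneg hγ0.le]
            gcongr
            exact hlip x y
    linarith
  set P : Set (EuclideanSpace ℝ (Fin n)) :=
    {p | gradient f p = 0 ∧ ∃ u, u ≠ 0 ∧ ⟪u, fderiv ℝ (gradient f) p u⟫ < 0} with hP
  have hloc : ∀ p ∈ P, ∃ U ∈ 𝓝 p, volume {x | ∀ k, g^[k] x ∈ U} = 0 := by
    rintro p ⟨-, u, -, hu⟩
    have hd : HasStrictFDerivAt g (ContinuousLinearMap.id ℝ _ - γ • fderiv ℝ (gradient f) p) p :=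
      (hasStrictFDerivAt_id p).sub
        ((hG.contDiffAt.hasStrictFDerivAt one_ne_zero).const_smul γ)
    have hnorm : ‖fderiv ℝ (gradient f) p‖ ≤ L :=
      norm_fderiv_le_of_lip' ℝ hL.le (Eventually.of_forall fun x => hlip x p)
    refine exists_nhds_null volume hgc hd (fun v w => ?_) (fun w => ?_) u ?_
    · have hs : ⟪fderiv ℝ (gradient f) p v, w⟫ = ⟪v, fderiv ℝ (gradient f) p w⟫ := by
        rw [real_inner_comm _ v, inner_fderiv_gradient hf, inner_fderiv_gradient hf]
        exact hf.contDiffAt.isSymmSndFDerivAt (by simp) v w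
      simp [inner_sub_left, inner_sub_right, real_inner_smul_left, real_inner_smul_right, hs]
    · have h1 : ⟪w, fderiv ℝ (gradient f) p w⟫ ≤ L * ‖w‖ ^ 2 := by
        calc ⟪w, fderiv ℝ (gradient f) p w⟫ ≤ ‖w‖ * ‖fderiv ℝ (gradient f) p w‖ :=
              real_inner_le_norm _ _
          _ ≤ ‖w‖ * (L * ‖w‖) := by
              gcongr
              exact ContinuousLinearMap.le_of_opNorm_le _ hnorm w
          _ = _ := by ring
      have h2 : γ * ⟪w, fderiv ℝ (gradient f) p w⟫ ≤ γ * (L * ‖w‖ ^ 2) := by gcongr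
      have h3 : γ * L * ‖w‖ ^ 2 ≤ 1 * ‖w‖ ^ 2 := by gcongr
      simp only [sub_apply, ContinuousLinearMap.id_apply,
        smul_apply, inner_sub_right, real_inner_smul_right,
        real_inner_self_eq_norm_sq]
      linarith
    · simp only [sub_apply, ContinuousLinearMap.id_apply,
        smul_apply, inner_sub_right, real_inner_smul_right]
      linarith [mul_neg_of_pos_of_neg hγ0 hu]
  choose! U hU hU0 using hloc
  obtain ⟨t, htP, htc, hcov⟩ := TopologicalSpace.countable_cover_nhdsWithin
    (f := fun p => interior (U p)) (s := P)
    fun p hp => mem_nhdsWithin_of_mem_nhds (interior_mem_nhds.2 (hU p hp))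
  have hnull : volume (⋃ q ∈ t, ⋃ N : ℕ, g^[N] ⁻¹' {x | ∀ k, g^[k] x ∈ U q}) = 0 := by
    rw [measure_biUnion_null_iff htc]
    intro q hq
    exact measure_iUnion_null fun N => null_preimage_iterate volume hanti (hU0 q (htP hq)) N
  refine measure_mono_null ?_ hnull
  rintro x ⟨p, hp, hx⟩
  obtain ⟨q, hq, hpq⟩ := Set.mem_iUnion₂.1 (hcov hp)
  obtain ⟨N, hN⟩ := eventually_atTop.1 (hx.eventually (isOpen_interior.mem_nhds hpq))
  refine Set.mem_iUnion₂.2 ⟨q, hq, Set.mem_iUnion.2 ⟨N, fun k => ?_⟩⟩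
  rw [← Function.iterate_add_apply]
  exact interior_subset (hN (k + N) (Nat.le_add_left N k))
end

section
/- Let f : ℝⁿ → ℝ be a twice continuously differentiable function. Then the set of vectors l ∈ ℝⁿ for which there exists a point x ∈ ℝⁿ with ∇f(x) + l = 0 and with the Hessian ∇²f(x) singular (i.e., not invertible) has Lebesgue measure zero. Equivalently, for almost every l ∈ ℝⁿ, every critical point of the regularized function f_l(x) = f(x) + ⟨l, x⟩ has a non-singular Hessian. -/
/-! Milnor's argument: `l` lies in the bad set exactly when `-l` is a critical value of the
`C¹` map `∇f : ℝⁿ → ℝⁿ`. By the equidimensional Sard theorem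
(`addHaar_image_eq_zero_of_det_fderivWithin_eq_zero`) the critical values of `∇f` form a null set,
and Lebesgue measure is invariant under `l ↦ -l`. -/

open MeasureTheory Filter Topology
open scoped RealInnerProductSpace

/-- The gradient is the derivative followed by the Riesz isometry, so it loses exactly one order
of smoothness. -/
theorem differentiable_gradient_of_contDiff_two {n : ℕ} {f : EuclideanSpace ℝ (Fin n) → ℝ}
    (hf : ContDiff ℝ 2 f) : Differentiable ℝ (gradient f) := by
  have h : Differentiable ℝ (fderiv ℝ f) :=
    (hf.fderiv_right (m := 1) (by norm_num)).differentiable one_ne_zero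
  exact (InnerProductSpace.toDual ℝ
    (EuclideanSpace ℝ (Fin n))).symm.toContinuousLinearEquiv.differentiable.comp h

theorem det_eq_zero_of_not_bijective {n : ℕ}
    {A : EuclideanSpace ℝ (Fin n) →L[ℝ] EuclideanSpace ℝ (Fin n)}
    (hA : ¬ Function.Bijective A) : A.det = 0 := by
  by_contra h
  exact hA (LinearMap.equivOfDetNeZero
    (A : EuclideanSpace ℝ (Fin n) →ₗ[ℝ] EuclideanSpace ℝ (Fin n)) h).bijective

/-- Milnor: For a `C²` function `f : ℝⁿ → ℝ`, the set of vectors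
`l` for which the regularized function `f_l(x) = f(x) + ⟨l, x⟩` has some
critical point (`∇f(x) + l = 0`) with singular Hessian has Lebesgue measure
zero. -/
theorem linear_regularizer_nondegenerate {n : ℕ} (f : EuclideanSpace ℝ (Fin n) → ℝ)
    (hf : ContDiff ℝ 2 f) :
    volume {l : EuclideanSpace ℝ (Fin n) |
      ∃ x : EuclideanSpace ℝ (Fin n), gradient f x + l = 0 ∧
        ¬ Function.Bijective (fderiv ℝ (gradient f) x)} = 0 := by
  set s := {x : EuclideanSpace ℝ (Fin n) | ¬ Function.Bijective (fderiv ℝ (gradient f) x)}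
  have hsard : volume (gradient f '' s) = 0 :=
    addHaar_image_eq_zero_of_det_fderivWithin_eq_zero volume
      (fun x _ => (differentiable_gradient_of_contDiff_two hf x).hasFDerivAt.hasFDerivWithinAt)
      (fun x hx => det_eq_zero_of_not_bijective hx)
  have hneg : volume (Neg.neg ⁻¹' (gradient f '' s)) = 0 := by
    rw [Measure.measure_preimage_neg, hsard]
  refine measure_mono_null ?_ hneg
  rintro l ⟨x, hx, hsing⟩
  exact ⟨x, hsing, eq_neg_of_add_eq_zero_left hx⟩
end

section
/- Consider the function f : ℝ → ℝ given by f(x) = (x² − 1)³ = (x−1)³(x+1)³. For every ε ∈ (0, 1) there exists δ > 0 such that for every l ∈ ℝ with 0 < |l| < δ, the regularized function f_l(x) = f(x) + l·x has a local minimum at some point x* with 1 < |x*| < 1 + ε; moreover this point x* is not a critical point of f (indeed f′(x*) = −l ≠ 0). Hence every nonzero (sufficiently small) linear regularizer induces a saddle-node bifurcation of one of the non-strict saddle points x = ±1 of f which creates a false minimum. -/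
/-!
The derivative of `f(x) = (x² − 1)³` is `f′(x) = 6x(x² − 1)²`. It vanishes at `x = 1` and is
positive on `(1, ∞)`, so by the intermediate value theorem it takes every value in
`(0, f′(1 + ε))` on `(1, 1 + ε)`; since `f′` is odd, every `−l` with `0 < |l| < f′(1 + ε)` is the
value of `f′` at a point `x` with `1 < |x| < 1 + ε`. Any such point is a local minimum of
`f(x) + l x`, because the graph of `f` lies above its tangent at `x` as long as `y² ≥ 1`: with
`a = x² − 1` and `b = y² − 1`,
`f(y) − f(x) − f′(x)(y − x) = (b − a)²(b + 2a) + 3a²(y − x)² ≥ 0`.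
-/

open Filter Topology

/-- Outside `[-1, 1]`, a critical point of `f_l` is a local minimum: by the tangent-line identity
it minimizes `f_l` over the neighbourhood `{y | 1 < y ^ 2}`. -/
lemma isLocalMin_of_one_lt_sq {x l : ℝ} (hx : 1 < x ^ 2) (hl : 6 * x * (x ^ 2 - 1) ^ 2 = -l) :
    IsLocalMin (fun y : ℝ => (y ^ 2 - 1) ^ 3 + l * y) x := by
  have hopen : ∀ᶠ y : ℝ in 𝓝 x, 1 < y ^ 2 :=
    (continuous_pow 2).continuousAt.eventually (lt_mem_nhds hx)
  filter_upwards [hopen] with y hy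
  have h₁ : 0 ≤ (y ^ 2 - x ^ 2) ^ 2 * ((y ^ 2 - 1) + 2 * (x ^ 2 - 1)) :=
    mul_nonneg (sq_nonneg _) (by linarith)
  have h₂ : 0 ≤ 3 * (x ^ 2 - 1) ^ 2 * (y - x) ^ 2 := by positivity
  obtain rfl : l = -(6 * x * (x ^ 2 - 1) ^ 2) := by linarith
  linarith

lemma exists_slope_eq {ε c : ℝ} (hε : 0 < ε) (hc : 0 < c)
    (hcε : c < 6 * (1 + ε) * ((1 + ε) ^ 2 - 1) ^ 2) :
    ∃ x : ℝ, 1 < x ∧ x < 1 + ε ∧ 6 * x * (x ^ 2 - 1) ^ 2 = c := by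
  have hcont : ContinuousOn (fun x : ℝ => 6 * x * (x ^ 2 - 1) ^ 2) (Set.Icc 1 (1 + ε)) := by
    fun_prop
  obtain ⟨x, hx, hxc⟩ := intermediate_value_Ioo (by linarith) hcont
    (show c ∈ Set.Ioo _ _ from ⟨by norm_num [hc], hcε⟩)
  exact ⟨x, hx.1, hx.2, hxc⟩

/-- For `f(x) = (x² − 1)³`, every sufficiently small nonzero
linear regularizer `l` creates a false local minimum of `f_l(x) = f(x) + l·x`
at a point `x*` with `1 < |x*| < 1 + ε`, and this point is not a critical
point of `f` (indeed `f′(x*) = −l ≠ 0`). -/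
theorem linear_regularizer_creates_false_minimum (f : ℝ → ℝ)
    (hf : f = fun x => (x ^ 2 - 1) ^ 3) :
    ∀ ε ∈ Set.Ioo (0 : ℝ) 1, ∃ δ > 0, ∀ l : ℝ, 0 < |l| → |l| < δ →
      ∃ xs : ℝ, IsLocalMin (fun x => f x + l * x) xs ∧
        1 < |xs| ∧ |xs| < 1 + ε ∧ deriv f xs = -l ∧ deriv f xs ≠ 0 := by
  subst hf
  rintro ε ⟨hε, -⟩
  have hpos : 0 < (1 + ε) ^ 2 - 1 := by nlinarith
  refine ⟨6 * (1 + ε) * ((1 + ε) ^ 2 - 1) ^ 2, by positivity, fun l hl hlδ => ?_⟩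
  have hl0 : l ≠ 0 := abs_pos.mp hl
  obtain ⟨x, hx1, hxε, hx⟩ := exists_slope_eq hε hl hlδ
  -- `f′` is odd, so the solution for the slope `|l|` gives one for `-l` up to sign.
  obtain ⟨xs, habs, hslope⟩ : ∃ xs : ℝ, |xs| = x ∧ 6 * xs * (xs ^ 2 - 1) ^ 2 = -l := by
    rcases abs_choice l with h | h
    · exact ⟨-x, by rw [abs_neg, abs_of_pos (by linarith)], by rw [neg_sq]; linarith⟩
    · exact ⟨x, abs_of_pos (by linarith), by linarith⟩
  have hsq : 1 < xs ^ 2 := by rw [← sq_abs, habs]; nlinarith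
  have hderiv : deriv (fun x : ℝ => (x ^ 2 - 1) ^ 3) xs = -l := by
    have h := (((hasDerivAt_id xs).pow 2).sub_const 1).pow 3
    rw [← hslope]
    refine (h.congr_deriv ?_).deriv
    simp
    ring
  exact ⟨xs, isLocalMin_of_one_lt_sq hsq hslope, by rwa [habs], by rwa [habs], hderiv,
    by rw [hderiv]; exact neg_ne_zero.mpr hl0⟩
end

section
/- Consider f : ℝ² → ℝ given by f(x, y) = (1/3)x³ + x y², so ∇f(x, y) = (x² + y², 2xy). Then: (i) the origin (0,0) is a non-strict saddle of f, i.e., ∇f(0,0) = 0, the Hessian ∇²f(0,0) is the zero matrix (minimum eigenvalue 0), and every neighborhood of (0,0) contains points where f is strictly negative and points where f is strictly positive; (ii) for every (a, b) ∈ ℝ² with (a, b) ≠ (0, 0), the regularized function f_l with l = ∇f(a,b) = (a² + b², 2ab), namely f_l(x,y) = f(x,y) + (a² + b²)x + 2ab·y, has no critical points at all in ℝ². -/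
/-!
The partial derivatives of `f(x, y) = x³/3 + x y²` give `∇f(x, y) = (x² + y², 2xy)`. This map is
homogeneous quadratic, so it and its derivative vanish at the origin, while
`f(t, 0) = t³ / 3` takes both signs arbitrarily close to the origin. The first component of `∇f` is
nonnegative and vanishes only at the origin, so `∇f(p) + ∇f(q)` has positive first component
whenever `q ≠ 0`.
-/

open Filter Topology
open scoped RealInnerProductSpace

/-- The function `f(x, y) = (1/3)x³ + x·y²` on `ℝ²`. -/
noncomputable def fEx12 : EuclideanSpace ℝ (Fin 2) → ℝ :=
  fun p => (p 0) ^ 3 / 3 + p 0 * (p 1) ^ 2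

theorem hasGradientAt_fEx12 (p : EuclideanSpace ℝ (Fin 2)) :
    HasGradientAt fEx12 !₂[(p 0) ^ 2 + (p 1) ^ 2, 2 * p 0 * p 1] p := by
  rw [hasGradientAt_iff_hasFDerivAt]
  have h0 : HasFDerivAt (fun p : EuclideanSpace ℝ (Fin 2) => p 0)
      (EuclideanSpace.proj 0 : EuclideanSpace ℝ (Fin 2) →L[ℝ] ℝ) p :=
    (EuclideanSpace.proj 0 : EuclideanSpace ℝ (Fin 2) →L[ℝ] ℝ).hasFDerivAt
  have h1 : HasFDerivAt (fun p : EuclideanSpace ℝ (Fin 2) => p 1)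
      (EuclideanSpace.proj 1 : EuclideanSpace ℝ (Fin 2) →L[ℝ] ℝ) p :=
    (EuclideanSpace.proj 1 : EuclideanSpace ℝ (Fin 2) →L[ℝ] ℝ).hasFDerivAt
  have h := ((h0.pow 3).mul_const (3⁻¹ : ℝ)).add (h0.mul (h1.pow 2))
  refine (h.congr_fderiv ?_).congr_of_eventuallyEq
    (Eventually.of_forall fun q => by simp [fEx12, div_eq_mul_inv])
  ext v
  simp [PiLp.inner_apply, Fin.sum_univ_two]
  ring

theorem gradient_fEx12 :
    gradient fEx12 = fun p => !₂[(p 0) ^ 2 + (p 1) ^ 2, 2 * p 0 * p 1] :=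
  gradient_eq hasGradientAt_fEx12

theorem hasFDerivAt_gradient_fEx12_zero :
    HasFDerivAt (gradient fEx12)
      (0 : EuclideanSpace ℝ (Fin 2) →L[ℝ] EuclideanSpace ℝ (Fin 2)) 0 := by
  have h0 : HasFDerivAt (fun p : EuclideanSpace ℝ (Fin 2) => p 0)
      (EuclideanSpace.proj 0 : EuclideanSpace ℝ (Fin 2) →L[ℝ] ℝ) 0 :=
    (EuclideanSpace.proj 0 : EuclideanSpace ℝ (Fin 2) →L[ℝ] ℝ).hasFDerivAt
  have h1 : HasFDerivAt (fun p : EuclideanSpace ℝ (Fin 2) => p 1)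
      (EuclideanSpace.proj 1 : EuclideanSpace ℝ (Fin 2) →L[ℝ] ℝ) 0 :=
    (EuclideanSpace.proj 1 : EuclideanSpace ℝ (Fin 2) →L[ℝ] ℝ).hasFDerivAt
  rw [gradient_fEx12, ← hasFDerivWithinAt_univ, hasFDerivWithinAt_euclidean]
  intro i
  rw [hasFDerivWithinAt_univ]
  fin_cases i
  · refine (((h0.pow 2).add (h1.pow 2)).congr_fderiv ?_).congr_of_eventuallyEq
      (Eventually.of_forall fun q => by simp)
    ext v
    simp
  · refine (((h0.const_mul 2).mul h1).congr_fderiv ?_).congr_of_eventuallyEq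
      (Eventually.of_forall fun q => by simp)
    ext v
    simp

/-- For `f(x,y) = (1/3)x³ + xy²` with `∇f(x,y) = (x²+y², 2xy)`:
(i) the origin is a non-strict saddle (critical point, zero Hessian, and every
neighborhood of the origin contains points where `f` is strictly negative and
points where it is strictly positive); (ii) for every nonzero `q`, the
regularized function with `l = ∇f(q)` has no critical point anywhere in
`ℝ²`. -/
theorem no_critical_points_after_regularization :
    (∀ p : EuclideanSpace ℝ (Fin 2),
      gradient fEx12 p = ![(p 0) ^ 2 + (p 1) ^ 2, 2 * p 0 * p 1]) ∧
    gradient fEx12 0 = 0 ∧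
    fderiv ℝ (gradient fEx12) 0 = 0 ∧
    (∀ U ∈ 𝓝 (0 : EuclideanSpace ℝ (Fin 2)),
      (∃ p ∈ U, fEx12 p < 0) ∧ (∃ p ∈ U, 0 < fEx12 p)) ∧
    (∀ q : EuclideanSpace ℝ (Fin 2), q ≠ 0 →
      ∀ p : EuclideanSpace ℝ (Fin 2), gradient fEx12 p + gradient fEx12 q ≠ 0) := by
  refine ⟨fun p => by rw [gradient_fEx12], ?_, hasFDerivAt_gradient_fEx12_zero.fderiv, ?_, ?_⟩
  · rw [gradient_fEx12]
    ext i
    fin_cases i <;> simp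
  · intro U hU
    obtain ⟨ε, hε, hεU⟩ := Metric.mem_nhds_iff.1 hU
    -- The points `(∓ε/2, 0)` lie in the `ε`-ball, and `f(t, 0) = t³ / 3`.
    refine ⟨⟨EuclideanSpace.single 0 (-(ε / 2)), hεU ?_, ?_⟩,
      ⟨EuclideanSpace.single 0 (ε / 2), hεU ?_, ?_⟩⟩
    · simp [abs_of_pos hε, hε]
    · have : 0 < (ε / 2) ^ 3 := by positivity
      simp only [fEx12, PiLp.single_apply]
      norm_num
      nlinarith
    · simp [abs_of_pos hε, hε]
    · simp only [fEx12, PiLp.single_apply]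
      norm_num
      positivity
  · intro q hq p h
    apply hq
    rw [gradient_fEx12] at h
    have h0 := congrArg (fun v : EuclideanSpace ℝ (Fin 2) => v 0) h
    simp at h0
    ext i
    fin_cases i
    · simp
      nlinarith [sq_nonneg (p 0), sq_nonneg (p 1), sq_nonneg (q 0), sq_nonneg (q 1)]
    · simp
      nlinarith [sq_nonneg (p 0), sq_nonneg (p 1), sq_nonneg (q 0), sq_nonneg (q 1)]
end

section
/- Consider f : ℝ² → ℝ given by f(x, y) = (1/3)x y³, so ∇f(x, y) = ((1/3)y³, x y²). Then: (i) the critical set of f is exactly the x-axis {(x, 0) : x ∈ ℝ}, and at every critical point the Hessian ∇²f is the zero matrix, so every critical point is degenerate with minimum eigenvalue 0; (ii) −∇f(x, y) = ∇f(−x, −y) for all (x, y) ∈ ℝ²; (iii) for every (x₀, y₀) with y₀ ≠ 0, taking l = ∇f(x₀, y₀), the point (−x₀, −y₀) is a critical point of the regularized function f_l and the Hessian ∇²f(−x₀, −y₀) has a negative eigenvalue, so this critical point is a strict saddle of f_l. -/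
/-!
The gradient is the polynomial field `G(x, y) = (y³/3, x y²)`, which is odd and vanishes exactly
where `y = 0`. Its derivative, the Hessian of `f`, is the matrix `[[0, y²], [y², 2xy]]`. It is zero
when `y = 0`, and its determinant `-y⁴` is negative otherwise, so it is then indefinite: the
vector `(x₀ + y₀, -y₀)` gives its quadratic form at `(-x₀, -y₀)` the value `-2y₀⁴`.
-/

open Filter Topology
open scoped RealInnerProductSpace

/-- The function `f(x, y) = (1/3)x·y³` on `ℝ²`. -/
noncomputable def fEx13 : EuclideanSpace ℝ (Fin 2) → ℝ :=
  fun p => (1 / 3) * p 0 * (p 1) ^ 3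

/-- The vector field `(y³/3, x y²)`, which is the gradient of `fEx13`. -/
noncomputable def gradField (p : EuclideanSpace ℝ (Fin 2)) : EuclideanSpace ℝ (Fin 2) :=
  !₂[(1 / 3) * (p 1) ^ 3, p 0 * (p 1) ^ 2]

theorem hasFDerivAt_coord (i : Fin 2) (p : EuclideanSpace ℝ (Fin 2)) :
    HasFDerivAt (fun q : EuclideanSpace ℝ (Fin 2) => q i)
      (EuclideanSpace.proj i : EuclideanSpace ℝ (Fin 2) →L[ℝ] ℝ) p :=
  (EuclideanSpace.proj i : EuclideanSpace ℝ (Fin 2) →L[ℝ] ℝ).hasFDerivAt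

theorem gradient_fEx13 : gradient fEx13 = gradField := by
  funext p
  refine HasGradientAt.gradient ?_
  rw [hasGradientAt_iff_hasFDerivAt]
  refine (((hasFDerivAt_coord 0 p).const_mul (1 / 3)).mul
    ((hasFDerivAt_coord 1 p).pow 3)).congr_fderiv ?_
  ext v
  simp [gradField, PiLp.inner_apply, Fin.sum_univ_two]
  ring

/-- The Hessian `[[0, y²], [y², 2xy]]` of `fEx13`, in coordinates. -/
theorem fderiv_gradField (p u : EuclideanSpace ℝ (Fin 2)) :
    fderiv ℝ gradField p u = !₂[(p 1) ^ 2 * u 1, (p 1) ^ 2 * u 0 + 2 * p 0 * p 1 * u 1] := by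
  have h0 := ((hasFDerivAt_coord 1 p).pow 3).const_mul (1 / 3)
  have h1 := (hasFDerivAt_coord 0 p).mul ((hasFDerivAt_coord 1 p).pow 2)
  have hd : DifferentiableAt ℝ gradField p := by
    rw [differentiableAt_euclidean]
    intro i
    fin_cases i
    · exact h0.differentiableAt
    · exact h1.differentiableAt
  have hi := fun i => (hasFDerivAt_coord i (gradField p)).comp p hd.hasFDerivAt
  have e0 := congrArg (fun L => L u) ((hi 0).unique h0)
  have e1 := congrArg (fun L => L u) ((hi 1).unique h1)
  ext i
  fin_cases i
  · simp at e0 ⊢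
    rw [e0]
    ring
  · simp at e1 ⊢
    rw [e1]
    ring

theorem gradField_eq_zero_iff (p : EuclideanSpace ℝ (Fin 2)) : gradField p = 0 ↔ p 1 = 0 := by
  constructor
  · intro h
    have := congrArg (fun q : EuclideanSpace ℝ (Fin 2) => q 0) h
    simpa [gradField] using this
  · intro h
    ext i
    fin_cases i <;> simp [gradField, h]

theorem gradField_neg (p : EuclideanSpace ℝ (Fin 2)) : -gradField p = gradField (-p) := by
  ext i
  fin_cases i
  · simp [gradField]
    ring
  · simp [gradField]

/-- For `f(x,y) = (1/3)xy³` with `∇f(x,y) = ((1/3)y³, xy²)`: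
(i) the critical set of `f` is exactly the x-axis and at every critical point
the Hessian is the zero matrix; (ii) `−∇f(x,y) = ∇f(−x,−y)` everywhere;
(iii) for every `(x₀, y₀)` with `y₀ ≠ 0`, taking `l = ∇f(x₀, y₀)`, the point
`(−x₀, −y₀)` is a critical point of the regularized function `f_l` and the
Hessian at `(−x₀, −y₀)` has a negative eigenvalue, so it is a strict saddle of
`f_l`. -/
theorem no_minima_after_regularization :
    (∀ p : EuclideanSpace ℝ (Fin 2),
      gradient fEx13 p = ![(1 / 3) * (p 1) ^ 3, p 0 * (p 1) ^ 2]) ∧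
    {p : EuclideanSpace ℝ (Fin 2) | gradient fEx13 p = 0} =
      {p : EuclideanSpace ℝ (Fin 2) | p 1 = 0} ∧
    (∀ p : EuclideanSpace ℝ (Fin 2), gradient fEx13 p = 0 →
      fderiv ℝ (gradient fEx13) p = 0) ∧
    (∀ p : EuclideanSpace ℝ (Fin 2), -gradient fEx13 p = gradient fEx13 (-p)) ∧
    (∀ p : EuclideanSpace ℝ (Fin 2), p 1 ≠ 0 →
      gradient fEx13 (-p) + gradient fEx13 p = 0 ∧
      ∃ u : EuclideanSpace ℝ (Fin 2), ⟪u, fderiv ℝ (gradient fEx13) (-p) u⟫ < 0) := by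
  rw [gradient_fEx13]
  refine ⟨fun p => rfl, Set.ext gradField_eq_zero_iff, fun p hp => ?_, gradField_neg,
    fun p hp => ⟨?_, !₂[p 0 + p 1, -p 1], ?_⟩⟩
  · have h := (gradField_eq_zero_iff p).1 hp
    refine ContinuousLinearMap.ext fun u => ?_
    rw [fderiv_gradField]
    ext i
    fin_cases i <;> simp [h]
  · rw [← gradField_neg, neg_add_cancel]
  · rw [fderiv_gradField]
    have hpos : 0 < (p 1) ^ 4 := by positivity
    simp [PiLp.inner_apply, Fin.sum_univ_two]
    nlinarith [hpos]
end
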